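/- Let $\Gamma$ be a compact metric space with Borel $\sigma$-algebra $\mathcal{B}$, $P$ a Feller transition kernel, and $\nu$ a Borel probability measure with $I(\nu) < \infty$, where $I$ is the Donsker-Varadhan functional $I(\nu) = -\inf_{f>0 \text{ continuous}} \int \log\frac{Pf}{f}\,d\nu$. Then there exists a probability measure $\mu$ on $\Gamma\times\Gamma$ whose left and right marginals both equal $\nu$, such that $D(\mu \Vert \mu^P) = I(\nu)$, where $\mu^P(A\times B) = \int_A P(x,B)\,d\nu(x)$ and $D$ is relative entropy. In particular, the infimum in the variational identity $I(\nu) = \inf\{D(\mu\Vert\mu^P) : \mu \in M(\Gamma\times\Gamma),\ \mu_L = \mu_R = \nu\}$ is attained. -/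

import Mathlib

open MeasureTheory ProbabilityTheory
open scoped Classical

/-- The relative entropy (Kullback-Leibler divergence) of `μ` with respect to `ρ`,
as an extended real number. -/
noncomputable def relEnt {Ω : Type*} [MeasurableSpace Ω] (μ ρ : Measure Ω) : EReal :=
  if μ ≪ ρ ∧ Integrable (fun x => Real.log (μ.rnDeriv ρ x).toReal) μ
  then ((∫ x, Real.log (μ.rnDeriv ρ x).toReal ∂μ : ℝ) : EReal)
  else ⊤

/-- The Donsker-Varadhan action functional
`I(ν) = - inf { ∫ log (P f (x) / f(x)) ν(dx) : f positive continuous }`. -/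
noncomputable def dvRate {Γ : Type*} [MeasurableSpace Γ] [TopologicalSpace Γ]
    (P : Kernel Γ Γ) (ν : Measure Γ) : ℝ :=
  - ⨅ f : {f : Γ → ℝ // Continuous f ∧ ∀ x, 0 < f x},
      ∫ x, Real.log ((∫ y, f.1 y ∂ P x) / f.1 x) ∂ν

open Filter Topology BoundedContinuousFunction InformationTheory Real

/-!
Write `L(g) = ∫ log (∫ exp g(x, y) P(x, dy)) ν(dx)`. Substituting `f = exp v` turns `I(ν)` into
the supremum of `∫ v dν - L(v)` over continuous functions `v` of the second variable, so on the
space of sums `u(x) + v(y)` the functional `u + v ↦ ∫ u dν + ∫ v dν` is dominated by the convex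
functional `L + I(ν)`. The Hahn-Banach theorem extends it to all continuous functions of two
variables; the domination forces the extension to be positive, so it is integration against a
measure `μ`, both of whose marginals are `ν`. As `L(g) ≤ ∫ (exp g - 1) d(ν ⊗ₘ P)`, one gets
`∫ g dμ ≤ I(ν) + ∫ (exp g - 1) d(ν ⊗ₘ P)` for continuous, then for bounded measurable `g`, and
taking for `g` the truncated logarithm of the density of `μ` yields `D(μ ‖ ν ⊗ₘ P) ≤ I(ν)`.
Conversely, the Gibbs variational inequality, applied to `v(y) - log (∫ exp v dP(x))`, bounds
`∫ v dν - L(v)` by the relative entropy of any measure with marginals `ν`.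
-/

section HahnBanach

variable {E : Type*} [AddCommGroup E] [Module ℝ E]

theorem exists_eq_smul_of_mem_pointedCone_hull {s : Set E} (hs : Convex ℝ s) (hne : s.Nonempty)
    {x : E} (hx : x ∈ PointedCone.hull ℝ s) :
    ∃ r : ℝ, 0 ≤ r ∧ ∃ y ∈ s, x = r • y := by
  induction hx using Submodule.span_induction with
  | mem x hx => exact ⟨1, zero_le_one, x, hx, (one_smul ℝ x).symm⟩
  | zero => exact ⟨0, le_rfl, hne.some, hne.some_mem, (zero_smul ℝ _).symm⟩
  | add _ _ _ _ hx hy =>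
    obtain ⟨a, ha, x, hx, rfl⟩ := hx
    obtain ⟨b, hb, y, hy, rfl⟩ := hy
    obtain ⟨z, hz, h⟩ := hs.exists_mem_add_smul_eq hx hy ha hb
    exact ⟨a + b, add_nonneg ha hb, z, hz, h.symm⟩
  | smul c _ _ hx =>
    obtain ⟨r, hr, y, hy, rfl⟩ := hx
    exact ⟨c * r, mul_nonneg c.2 hr, y, hy, smul_smul _ _ _⟩

theorem exists_extension_of_le_convexOn (f : E →ₗ.[ℝ] ℝ) {q : E → ℝ}
    (hq : ConvexOn ℝ Set.univ q) (hf : ∀ x : f.domain, f x ≤ q x) :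
    ∃ g : E →ₗ[ℝ] ℝ, (∀ x : f.domain, g x = f x) ∧ ∀ x, g x ≤ q x := by
  -- M. Riesz extension theorem for `(x, t) ↦ t - f x` and the cone over the epigraph of `q`.
  let epigraph : Set (E × ℝ) := {p | p.1 ∈ Set.univ ∧ q p.1 ≤ p.2}
  have mk_mem : ∀ x, (x, q x) ∈ epigraph := fun x => ⟨trivial, le_rfl⟩
  have mk_mem_hull : ∀ x, (x, q x) ∈ PointedCone.hull ℝ epigraph := fun x =>
    PointedCone.subset_hull (mk_mem x)
  let f' : E × ℝ →ₗ.[ℝ] ℝ := (-f).coprod (LinearMap.id.toPMap ⊤)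
  have f'_apply : ∀ x : f'.domain, f' x = x.1.2 - f ⟨x.1.1, x.2.1⟩ := fun x =>
    (sub_eq_neg_add _ _).symm
  have f'_nonneg : ∀ x : f'.domain, (x : E × ℝ) ∈ PointedCone.hull ℝ epigraph → 0 ≤ f' x := by
    rintro ⟨x, hx⟩ hx_hull
    obtain ⟨r, hr, z, ⟨-, hz⟩, rfl⟩ :=
      exists_eq_smul_of_mem_pointedCone_hull hq.convex_epigraph ⟨_, mk_mem 0⟩ hx_hull
    rcases hr.eq_or_lt with rfl | hr
    · simpa only [zero_smul] using! f'.map_zero.ge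
    · have hz_dom : z ∈ f'.domain := (Submodule.smul_mem_iff _ hr.ne').1 hx
      have hz_nonneg : 0 ≤ f' ⟨z, hz_dom⟩ := (f'_apply _).symm ▸ sub_nonneg.2 ((hf _).trans hz)
      exact (mul_nonneg hr.le hz_nonneg).trans_eq (f'.map_smul r ⟨z, hz_dom⟩).symm
  obtain ⟨g, g_eq, g_nonneg⟩ := riesz_extension _ f' f'_nonneg fun ⟨x, t⟩ =>
    ⟨⟨(0, q x - t), ⟨f.domain.zero_mem, trivial⟩⟩, by simpa using mk_mem_hull x⟩
  have g_mk : ∀ (x : f.domain) (t : ℝ), g (x, t) = t - f x := fun x t =>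
    (g_eq ⟨(x, t), ⟨x.2, trivial⟩⟩).trans (f'_apply _)
  refine ⟨-g.comp (LinearMap.inl ℝ E ℝ), fun x => by simp [g_mk x 0], fun x => ?_⟩
  calc -g (x, 0) = g (0, q x) - g (x, q x) := by simp [← map_sub, ← map_neg]
    _ = q x - g (x, q x) := by simpa using g_mk 0 (q x)
    _ ≤ q x := sub_le_self _ (g_nonneg _ (mk_mem_hull x))

end HahnBanach

section RieszMarkov

theorem exists_isFiniteMeasure_forall_integral_eq {X : Type*} [MeasurableSpace X]
    [TopologicalSpace X] [BorelSpace X] [T2Space X] [CompactSpace X]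
    (Λ : C(X, ℝ) →ₗ[ℝ] ℝ) (hΛ : ∀ g : C(X, ℝ), 0 ≤ g → 0 ≤ Λ g) :
    ∃ μ : Measure X, IsFiniteMeasure μ ∧ ∀ g : C(X, ℝ), ∫ x, g x ∂μ = Λ g := by
  let toContinuousMapₗ : CompactlySupportedContinuousMap X ℝ →ₗ[ℝ] C(X, ℝ) :=
    { toFun := fun g => g.toContinuousMap
      map_add' := fun _ _ => rfl
      map_smul' := fun _ _ => rfl }
  let Λ' := PositiveLinearMap.mk₀ (Λ ∘ₗ toContinuousMapₗ) fun g hg => hΛ g.toContinuousMap hg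
  exact ⟨RealRMK.rieszMeasure Λ', inferInstance, fun g =>
    RealRMK.integral_rieszMeasure Λ' ⟨g, HasCompactSupport.of_compactSpace g⟩⟩

end RieszMarkov

section BoundedMeasurable

theorem integrable_of_measurable_of_abs_le {X : Type*} [MeasurableSpace X] {m : Measure X}
    [IsFiniteMeasure m] {g : X → ℝ} (hg : Measurable g) {M : ℝ} (hM : ∀ x, |g x| ≤ M) :
    Integrable g m :=
  .of_bound hg.aestronglyMeasurable M (ae_of_all _ hM)

variable {X : Type*} [MeasurableSpace X] [TopologicalSpace X] [BorelSpace X]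

theorem exists_seq_boundedContinuous_tendsto_ae [NormalSpace X] {m : Measure X}
    [IsFiniteMeasure m] [m.WeaklyRegular] {g : X → ℝ} (hg : Measurable g) {M : ℝ}
    (hM : ∀ x, |g x| ≤ M) :
    ∃ k : ℕ → X →ᵇ ℝ, (∀ n x, |k n x| ≤ M) ∧ ∀ᵐ x ∂m, Tendsto (k · x) atTop (𝓝 (g x)) := by
  have hg_memLp : MemLp g 1 m :=
    memLp_one_iff_integrable.2 (integrable_of_measurable_of_abs_le hg hM)
  choose l hl_le hl_mem using fun n : ℕ =>
    hg_memLp.exists_boundedContinuous_eLpNorm_sub_le ENNReal.one_ne_top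
      (ε := ((n : ENNReal) + 1)⁻¹) (by simp)
  have hl_tendsto : Tendsto (fun n => eLpNorm (⇑(l n) - g) 1 m) atTop (𝓝 0) := by
    have hlim : Tendsto (fun n : ℕ => ((n : ENNReal) + 1)⁻¹) atTop (𝓝 0) := by
      exact_mod_cast ENNReal.tendsto_inv_nat_nhds_zero.comp (tendsto_add_atTop_nat 1)
    exact tendsto_of_tendsto_of_tendsto_of_le_of_le tendsto_const_nhds hlim (fun _ => zero_le)
      fun n => (eLpNorm_sub_comm _ _ _ _).trans_le (hl_le n)
  obtain ⟨φ, -, hφ⟩ := (tendstoInMeasure_of_tendsto_eLpNorm one_ne_zero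
    (fun n => (hl_mem n).1) hg_memLp.1 hl_tendsto).exists_seq_tendsto_ae
  have clip_le : ∀ n x, |max (-M) (min M (l (φ n) x))| ≤ M := fun n x =>
    abs_le.2 ⟨le_max_left _ _, max_le (neg_le_self ((abs_nonneg _).trans (hM x))) (min_le_left _ _)⟩
  refine ⟨fun n => .ofNormedAddCommGroup (fun x => max (-M) (min M (l (φ n) x))) (by fun_prop) M
    (clip_le n), clip_le, ?_⟩
  filter_upwards [hφ] with x hx
  have hclip : max (-M) (min M (g x)) = g x := by
    rw [min_eq_right (abs_le.1 (hM x)).2, max_eq_right (abs_le.1 (hM x)).1]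
  have hlim := (tendsto_const_nhds (x := -M)).max ((tendsto_const_nhds (x := M)).min hx)
  rwa [hclip] at hlim

theorem integral_le_add_integral_of_boundedContinuous [NormalSpace X] {μ ρ : Measure X}
    [IsFiniteMeasure μ] [IsFiniteMeasure ρ] [(μ + ρ).WeaklyRegular] {φ ψ : ℝ → ℝ}
    (hφ : Continuous φ) (hψ : Continuous ψ) {I : ℝ}
    (h : ∀ g : X →ᵇ ℝ, ∫ x, φ (g x) ∂μ ≤ I + ∫ x, ψ (g x) ∂ρ)
    {g : X → ℝ} (hg : Measurable g) {M : ℝ} (hM : ∀ x, |g x| ≤ M) :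
    ∫ x, φ (g x) ∂μ ≤ I + ∫ x, ψ (g x) ∂ρ := by
  obtain ⟨k, hkM, hk⟩ := exists_seq_boundedContinuous_tendsto_ae (m := μ + ρ) hg hM
  rw [ae_add_measure_iff] at hk
  have tendsto_integral : ∀ {θ : ℝ → ℝ} {m : Measure X} [IsFiniteMeasure m], Continuous θ →
      (∀ᵐ x ∂m, Tendsto (k · x) atTop (𝓝 (g x))) →
      Tendsto (fun n => ∫ x, θ (k n x) ∂m) atTop (𝓝 (∫ x, θ (g x) ∂m)) := by
    intro θ m _ hθ hkm
    obtain ⟨C, hC⟩ :=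
      isCompact_Icc.exists_bound_of_continuousOn (hθ.continuousOn (s := Set.Icc (-M) M))
    refine tendsto_integral_of_dominated_convergence (fun _ => C)
      (fun n => (hθ.comp (k n).continuous).aestronglyMeasurable) (integrable_const C)
      (fun n => ae_of_all _ fun x => hC _ (abs_le.1 (hkM n x))) ?_
    filter_upwards [hkm] with x hx using (hθ.tendsto _).comp hx
  exact le_of_tendsto_of_tendsto' (tendsto_integral hφ hk.1)
    ((tendsto_integral hψ hk.2).const_add I) fun n => h (k n)

end BoundedMeasurable

/-- The truncation of `s` to the interval `[a⁻¹, a]`, meant for `1 ≤ a`. The logarithm of a density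
truncated in this way is a bounded test function. -/
noncomputable def clamp (a s : ℝ) : ℝ := max a⁻¹ (min a s)

section Clamp

variable {a : ℝ}

theorem clamp_pos (ha : 0 < a) (s : ℝ) : 0 < clamp a s := lt_max_of_lt_left (inv_pos.2 ha)

theorem clamp_le (ha : 1 ≤ a) (s : ℝ) : clamp a s ≤ a :=
  max_le ((inv_le_one_of_one_le₀ ha).trans ha) (min_le_left _ _)

theorem abs_log_clamp_le (ha : 1 ≤ a) (s : ℝ) : |log (clamp a s)| ≤ log a := by
  have ha_pos : 0 < a := zero_lt_one.trans_le ha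
  refine abs_le.2 ⟨?_, log_le_log (clamp_pos ha_pos s) (clamp_le ha s)⟩
  exact (log_inv a).symm.trans_le (log_le_log (inv_pos.2 ha_pos) (le_max_left _ _))

@[fun_prop]
theorem measurable_clamp (a : ℝ) : Measurable (clamp a) := by
  unfold clamp; fun_prop

theorem klFun_clamp_le (ha : 1 ≤ a) (s : ℝ) :
    klFun (clamp a s) ≤ s * log (clamp a s) - (clamp a s - 1) := by
  -- Truncation moves `s` towards `1`, so the two factors have the same sign.
  suffices 0 ≤ (s - clamp a s) * log (clamp a s) by unfold klFun; linarith
  have ha_inv : a⁻¹ ≤ 1 := inv_le_one_of_one_le₀ ha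
  unfold clamp
  rcases le_total a s with has | hsa
  · rw [min_eq_left has, max_eq_right (ha_inv.trans ha)]
    exact mul_nonneg (sub_nonneg.2 has) (log_nonneg ha)
  · rw [min_eq_right hsa]
    rcases le_total a⁻¹ s with h | h
    · simp [max_eq_right h]
    · rw [max_eq_left h]
      exact mul_nonneg_of_nonpos_of_nonpos (sub_nonpos.2 h)
        (log_nonpos (inv_nonneg.2 (zero_le_one.trans ha)) ha_inv)

theorem tendsto_clamp_atTop {s : ℝ} (hs : 0 ≤ s) : Tendsto (clamp · s) atTop (𝓝 s) := by
  have h := tendsto_inv_atTop_zero.max (tendsto_const_nhds (x := s) (f := atTop (α := ℝ)))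
  rw [max_eq_right hs] at h
  refine h.congr' ?_
  filter_upwards [eventually_ge_atTop s] with a ha
  rw [clamp, min_eq_right ha]

end Clamp

section RelativeEntropy

variable {X : Type*} [MeasurableSpace X] {μ ρ : Measure X}

theorem absolutelyContinuous_of_forall_integral_le [IsFiniteMeasure μ] {I : ℝ}
    (h : ∀ g : X → ℝ, Measurable g → ∀ M, (∀ x, |g x| ≤ M) →
      ∫ x, g x ∂μ ≤ I + ∫ x, (exp (g x) - 1) ∂ρ) :
    μ ≪ ρ := by
  refine Measure.AbsolutelyContinuous.mk fun A hA hρA => ?_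
  have nsmul_le : ∀ n : ℕ, n • μ.real A ≤ I := by
    intro n
    have hn := h (A.indicator fun _ => (n : ℝ)) (measurable_const.indicator hA) n fun x => by
      by_cases hx : x ∈ A <;> simp [hx]
    have hρ_zero : ∫ x, (exp (A.indicator (fun _ => (n : ℝ)) x) - 1) ∂ρ = 0 := by
      refine integral_eq_zero_of_ae ?_
      filter_upwards [measure_eq_zero_iff_ae_notMem.1 hρA] with x hx
      simp [hx]
    rw [integral_indicator_const _ hA, hρ_zero, add_zero] at hn
    simpa [mul_comm] using hn
  refine (measureReal_eq_zero_iff).1 (measureReal_nonneg.antisymm' (not_lt.1 fun hpos => ?_))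
  obtain ⟨n, hn⟩ := exists_lt_nsmul hpos I
  exact hn.not_ge (nsmul_le n)

section

variable [IsFiniteMeasure μ] [IsFiniteMeasure ρ]

theorem lintegral_klFun_clamp_rnDeriv_le {I : ℝ} (hμρ : μ ≪ ρ)
    (h : ∀ g : X → ℝ, Measurable g → ∀ M, (∀ x, |g x| ≤ M) →
      ∫ x, g x ∂μ ≤ I + ∫ x, (exp (g x) - 1) ∂ρ)
    {a : ℝ} (ha : 1 ≤ a) :
    ∫⁻ x, ENNReal.ofReal (klFun (clamp a (μ.rnDeriv ρ x).toReal)) ∂ρ ≤ ENNReal.ofReal I := by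
  set d : X → ℝ := fun x => (μ.rnDeriv ρ x).toReal
  have hd : Measurable d := (Measure.measurable_rnDeriv μ ρ).ennreal_toReal
  have clamp_pos' : ∀ x, 0 < clamp a (d x) := fun x => clamp_pos (zero_lt_one.trans_le ha) _
  have hlog : Measurable fun x => log (clamp a (d x)) := by fun_prop
  have hlog_bound : ∀ x, |log (clamp a (d x))| ≤ log a := fun x => abs_log_clamp_le ha _
  have hlog_int : Integrable (fun x => d x * log (clamp a (d x))) ρ :=
    Measure.integrable_toReal_rnDeriv.mul_bdd hlog.aestronglyMeasurable (ae_of_all _ hlog_bound)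
  have hclamp_int : Integrable (fun x => clamp a (d x) - 1) ρ :=
    (integrable_of_measurable_of_abs_le (by fun_prop) fun x =>
      (abs_of_pos (clamp_pos' _)).trans_le (clamp_le ha _)).sub (integrable_const _)
  have h_int : Integrable (fun x => d x * log (clamp a (d x)) - (clamp a (d x) - 1)) ρ :=
    hlog_int.sub hclamp_int
  have klFun_le : ∀ x, klFun (clamp a (d x)) ≤ d x * log (clamp a (d x)) - (clamp a (d x) - 1) :=
    fun x => klFun_clamp_le ha _
  have integral_le : ∫ x, (d x * log (clamp a (d x)) - (clamp a (d x) - 1)) ∂ρ ≤ I := by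
    have htest := h _ hlog _ hlog_bound
    simp only [exp_log (clamp_pos' _)] at htest
    rw [integral_sub hlog_int hclamp_int, sub_le_iff_le_add]
    exact (integral_rnDeriv_smul hμρ).trans_le htest
  calc ∫⁻ x, ENNReal.ofReal (klFun (clamp a (d x))) ∂ρ
      ≤ ∫⁻ x, ENNReal.ofReal (d x * log (clamp a (d x)) - (clamp a (d x) - 1)) ∂ρ :=
        lintegral_mono fun x => ENNReal.ofReal_le_ofReal (klFun_le x)
    _ = ENNReal.ofReal (∫ x, (d x * log (clamp a (d x)) - (clamp a (d x) - 1)) ∂ρ) :=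
        (ofReal_integral_eq_lintegral_ofReal h_int (ae_of_all _ fun x =>
          (klFun_nonneg (clamp_pos' _).le).trans (klFun_le x))).symm
    _ ≤ ENNReal.ofReal I := ENNReal.ofReal_le_ofReal integral_le

theorem klDiv_le_of_forall_integral_le {I : ℝ}
    (h : ∀ g : X → ℝ, Measurable g → ∀ M, (∀ x, |g x| ≤ M) →
      ∫ x, g x ∂μ ≤ I + ∫ x, (exp (g x) - 1) ∂ρ) :
    klDiv μ ρ ≤ ENNReal.ofReal I := by
  have hμρ := absolutelyContinuous_of_forall_integral_le h
  rw [klDiv_eq_lintegral_klFun_of_ac hμρ]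
  have hlim : ∀ x, Tendsto (fun n : ℕ =>
      ENNReal.ofReal (klFun (clamp (n + 1) (μ.rnDeriv ρ x).toReal))) atTop
      (𝓝 (ENNReal.ofReal (klFun (μ.rnDeriv ρ x).toReal))) := fun x =>
    (ENNReal.continuous_ofReal.comp continuous_klFun).continuousAt.tendsto.comp <|
      (tendsto_clamp_atTop ENNReal.toReal_nonneg).comp <|
        tendsto_atTop_add_const_right _ _ tendsto_natCast_atTop_atTop
  simp only [← (hlim _).liminf_eq]
  refine (lintegral_liminf_le fun n => by fun_prop).trans ?_
  refine (liminf_le_liminf (.of_forall fun n =>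
    lintegral_klFun_clamp_rnDeriv_le hμρ h (by simp))).trans_eq (by simp)

theorem relEnt_eq_klDiv (h : μ Set.univ = ρ Set.univ) :
    relEnt μ ρ = (klDiv μ ρ : EReal) := by
  by_cases hac : μ ≪ ρ ∧ Integrable (fun x => log (μ.rnDeriv ρ x).toReal) μ
  · rw [relEnt, if_pos hac, ← EReal.coe_toReal (x := (klDiv μ ρ : EReal))
      (by simpa using klDiv_ne_top hac.1 hac.2) (by simp), EReal.toReal_coe_ennreal,
      toReal_klDiv_of_measure_eq hac.1 h]
    rfl
  · rw [relEnt, if_neg hac, klDiv_eq_top_iff.2 (not_and.1 hac), EReal.coe_ennreal_top]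

end

theorem integral_sub_log_integral_exp_le_toReal_klDiv [IsProbabilityMeasure μ]
    [IsProbabilityMeasure ρ] (h : klDiv μ ρ ≠ ⊤) {g : X → ℝ} (hgμ : Integrable g μ)
    (hgρ : Integrable (fun x => exp (g x)) ρ) :
    ∫ x, g x ∂μ - log (∫ x, exp (g x) ∂ρ) ≤ (klDiv μ ρ).toReal := by
  obtain ⟨hμρ, hllr⟩ := klDiv_ne_top_iff.1 h
  have := isProbabilityMeasure_tilted hgρ
  have h_nonneg := integral_llr_add_sub_measure_univ_nonneg
    (hμρ.trans (absolutelyContinuous_tilted hgρ)) (integrable_llr_tilted_right hμρ hgμ hllr hgρ)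
  rw [integral_llr_tilted_right hμρ hgμ hgρ hllr, probReal_univ, probReal_univ] at h_nonneg
  rw [toReal_klDiv_of_measure_eq hμρ (by simp)]
  linarith

end RelativeEntropy

section LogLaplace

variable {X : Type*} [MeasurableSpace X] {m : Measure X}

theorem integrable_exp_of_measurable_of_abs_le [IsFiniteMeasure m] {f : X → ℝ} (hf : Measurable f)
    {M : ℝ} (hM : ∀ x, |f x| ≤ M) : Integrable (fun x => exp (f x)) m :=
  integrable_of_measurable_of_abs_le hf.exp fun x =>
    (abs_exp _).trans_le (exp_le_exp.2 (abs_le.1 (hM x)).2)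

theorem abs_log_integral_exp_le [IsProbabilityMeasure m] {f : X → ℝ} (hf : Measurable f)
    {M : ℝ} (hM : ∀ x, |f x| ≤ M) : |log (∫ x, exp (f x) ∂m)| ≤ M := by
  have hexp := integrable_exp_of_measurable_of_abs_le (m := m) hf hM
  have hpos := integral_exp_pos hexp
  rw [abs_le, le_log_iff_exp_le hpos, log_le_iff_le_exp hpos]
  constructor
  · simpa using integral_mono (integrable_const _) hexp fun x => exp_le_exp.2 (abs_le.1 (hM x)).1
  · simpa using integral_mono hexp (integrable_const _) fun x => exp_le_exp.2 (abs_le.1 (hM x)).2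

theorem log_integral_exp_nonpos [IsProbabilityMeasure m] {f : X → ℝ} (hf : ∀ x, f x ≤ 0) :
    log (∫ x, exp (f x) ∂m) ≤ 0 := by
  refine log_nonpos (integral_nonneg fun x => (exp_pos _).le) ?_
  simpa using integral_mono_of_nonneg (ae_of_all m fun x => (exp_pos (f x)).le)
    (integrable_const 1) (ae_of_all _ fun x => exp_le_one_iff.2 (hf x))

theorem log_integral_exp_const_add [NeZero m] {f : X → ℝ} (hf : Integrable (fun x => exp (f x)) m)
    (c : ℝ) : log (∫ x, exp (c + f x) ∂m) = c + log (∫ x, exp (f x) ∂m) := by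
  simp only [exp_add]
  rw [integral_const_mul, log_mul (exp_pos c).ne' (integral_exp_pos hf).ne', log_exp]

theorem log_integral_exp_le_sub_one [NeZero m] {f : X → ℝ}
    (hf : Integrable (fun x => exp (f x)) m) :
    log (∫ x, exp (f x) ∂m) ≤ ∫ x, exp (f x) ∂m - 1 :=
  log_le_sub_one_of_pos (integral_exp_pos hf)

theorem log_integral_exp_convex_combination_le [NeZero m] {f g : X → ℝ}
    (hf : Integrable (fun x => exp (f x)) m)
    (hg : Integrable (fun x => exp (g x)) m) {a b : ℝ} (ha : 0 ≤ a) (hb : 0 ≤ b)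
    (hab : a + b = 1) :
    log (∫ x, exp (a * f x + b * g x) ∂m) ≤
      a * log (∫ x, exp (f x) ∂m) + b * log (∫ x, exp (g x) ∂m) := by
  have exp_le : ∀ s t : ℝ, exp (a * s + b * t) ≤ a * exp s + b * exp t := fun s t =>
    convexOn_exp.2 trivial trivial ha hb hab
  have h_int : Integrable (fun x => exp (a * f x + b * g x)) m := by
    have hf_meas := aemeasurable_of_aemeasurable_exp hf.aemeasurable
    have hg_meas := aemeasurable_of_aemeasurable_exp hg.aemeasurable
    refine ((hf.const_mul a).add (hg.const_mul b)).mono' (by fun_prop) (ae_of_all _ fun x => ?_)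
    exact (abs_exp _).trans_le (exp_le _ _)
  -- Convexity of `exp` is applied after normalising `∫ exp f` and `∫ exp g` to `1`.
  set A := log (∫ x, exp (f x) ∂m) with hA
  set B := log (∫ x, exp (g x) ∂m) with hB
  have integral_exp_sub_f : ∫ x, exp (f x - A) ∂m = 1 := by
    simp only [exp_sub, integral_div, hA, exp_log (integral_exp_pos hf),
      div_self (integral_exp_pos hf).ne']
  have integral_exp_sub_g : ∫ x, exp (g x - B) ∂m = 1 := by
    simp only [exp_sub, integral_div, hB, exp_log (integral_exp_pos hg),
      div_self (integral_exp_pos hg).ne']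
  have hf' : Integrable (fun x => exp (f x - A)) m := by
    simpa only [exp_sub] using hf.div_const _
  have hg' : Integrable (fun x => exp (g x - B)) m := by
    simpa only [exp_sub] using hg.div_const _
  rw [log_le_iff_le_exp (integral_exp_pos h_int)]
  calc ∫ x, exp (a * f x + b * g x) ∂m
      = exp (a * A + b * B) * ∫ x, exp (a * (f x - A) + b * (g x - B)) ∂m := by
        rw [← integral_const_mul]
        simp only [← exp_add]
        ring_nf
    _ ≤ exp (a * A + b * B) * ∫ x, (a * exp (f x - A) + b * exp (g x - B)) ∂m := by
        refine mul_le_mul_of_nonneg_left ?_ (exp_pos _).le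
        exact integral_mono_of_nonneg (ae_of_all _ fun x => (exp_pos _).le)
          ((hf'.const_mul a).add (hg'.const_mul b)) (ae_of_all _ fun x => exp_le _ _)
    _ = exp (a * A + b * B) := by
        rw [integral_add (hf'.const_mul a) (hg'.const_mul b), integral_const_mul,
          integral_const_mul, integral_exp_sub_f, integral_exp_sub_g]
        simp [hab]

end LogLaplace

section MeanLogLaplace

variable {X Y : Type*} [MeasurableSpace X] [MeasurableSpace Y]

/-- The average over `x ~ ν` of the logarithmic Laplace transform of `g (x, ·)` under `P x`. It is a
convex functional of `g`, and for functions `v` of the second variable the supremum of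
`∫ v dν - meanLogLaplace P ν v` is the Donsker-Varadhan functional of `ν`. -/
noncomputable def meanLogLaplace (P : Kernel X Y) (ν : Measure X) (g : X × Y → ℝ) : ℝ :=
  ∫ x, log (∫ y, exp (g (x, y)) ∂P x) ∂ν

variable {P : Kernel X Y} {ν : Measure X} {g : X × Y → ℝ} {M : ℝ}

theorem measurable_log_integral_exp [IsSFiniteKernel P] (hg : Measurable g) :
    Measurable fun x => log (∫ y, exp (g (x, y)) ∂P x) :=
  (StronglyMeasurable.integral_kernel_prod_right (κ := P)
    (f := fun x y => exp (g (x, y))) (hg.exp.stronglyMeasurable)).measurable.log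

theorem integrable_exp_section [IsFiniteKernel P] (hg : Measurable g) (hM : ∀ z, |g z| ≤ M)
    (x : X) :
    Integrable (fun y => exp (g (x, y))) (P x) :=
  integrable_exp_of_measurable_of_abs_le (hg.comp measurable_prodMk_left) fun _ => hM _

variable [IsMarkovKernel P]

theorem meanLogLaplace_nonpos (hg : ∀ z, g z ≤ 0) : meanLogLaplace P ν g ≤ 0 :=
  integral_nonpos fun _ => log_integral_exp_nonpos fun _ => hg _

variable [IsProbabilityMeasure ν]

theorem integrable_log_integral_exp (hg : Measurable g) (hM : ∀ z, |g z| ≤ M) :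
    Integrable (fun x => log (∫ y, exp (g (x, y)) ∂P x)) ν :=
  integrable_of_measurable_of_abs_le (measurable_log_integral_exp hg) fun _ =>
    abs_log_integral_exp_le (hg.comp measurable_prodMk_left) fun _ => hM _

theorem meanLogLaplace_fst_add (hg : Measurable g) (hM : ∀ z, |g z| ≤ M) {u : X → ℝ}
    (hu : Integrable u ν) :
    meanLogLaplace P ν (fun z => u z.1 + g z) = ∫ x, u x ∂ν + meanLogLaplace P ν g := by
  rw [meanLogLaplace, meanLogLaplace, ← integral_add hu (integrable_log_integral_exp hg hM)]
  exact integral_congr_ae (ae_of_all _ fun x =>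
    log_integral_exp_const_add (integrable_exp_section hg hM x) (u x))

theorem meanLogLaplace_le_integral_exp_sub_one (hg : Measurable g) (hM : ∀ z, |g z| ≤ M) :
    meanLogLaplace P ν g ≤ ∫ z, (exp (g z) - 1) ∂(ν ⊗ₘ P) := by
  have hexp : Integrable (fun z => exp (g z)) (ν ⊗ₘ P) :=
    integrable_exp_of_measurable_of_abs_le hg hM
  have hexp_section : Integrable (fun x => ∫ y, exp (g (x, y)) ∂P x) ν := by
    simpa using hexp.integral_compProd
  calc meanLogLaplace P ν g ≤ ∫ x, (∫ y, exp (g (x, y)) ∂P x - 1) ∂ν :=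
        integral_mono (integrable_log_integral_exp hg hM)
          (hexp_section.sub (integrable_const _)) fun x =>
            log_integral_exp_le_sub_one (integrable_exp_section hg hM x)
    _ = ∫ z, (exp (g z) - 1) ∂(ν ⊗ₘ P) := by
        rw [integral_sub hexp_section (integrable_const _), integral_sub hexp (integrable_const _),
          Measure.integral_compProd hexp]
        simp

theorem meanLogLaplace_convex_combination_le {f : X × Y → ℝ} (hf : Measurable f) {L : ℝ}
    (hL : ∀ z, |f z| ≤ L) (hg : Measurable g) (hM : ∀ z, |g z| ≤ M)
    {a b : ℝ} (ha : 0 ≤ a) (hb : 0 ≤ b) (hab : a + b = 1) :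
    meanLogLaplace P ν (fun z => a * f z + b * g z) ≤
      a * meanLogLaplace P ν f + b * meanLogLaplace P ν g := by
  have hf_int := (integrable_log_integral_exp (P := P) (ν := ν) hf hL).const_mul a
  have hg_int := (integrable_log_integral_exp (P := P) (ν := ν) hg hM).const_mul b
  have hfg_bound : ∀ z, |a * f z + b * g z| ≤ a * L + b * M := fun z => by
    refine (abs_add_le _ _).trans ?_
    rw [abs_mul, abs_mul, abs_of_nonneg ha, abs_of_nonneg hb]
    gcongr
    exacts [hL z, hM z]
  simp only [meanLogLaplace]
  rw [← integral_const_mul, ← integral_const_mul, ← integral_add hf_int hg_int]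
  exact integral_mono (integrable_log_integral_exp (by fun_prop) hfg_bound) (hf_int.add hg_int)
    fun x => log_integral_exp_convex_combination_le (integrable_exp_section hf hL x)
      (integrable_exp_section hg hM x) ha hb hab

theorem integral_sub_meanLogLaplace_le_toReal_klDiv {μ : Measure (X × Y)} [IsProbabilityMeasure μ]
    (hμ : μ.fst = ν) (hkl : klDiv μ (ν ⊗ₘ P) ≠ ⊤) (hg : Measurable g) (hM : ∀ z, |g z| ≤ M) :
    ∫ z, g z ∂μ - meanLogLaplace P ν g ≤ (klDiv μ (ν ⊗ₘ P)).toReal := by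
  set L : X → ℝ := fun x => log (∫ y, exp (g (x, y)) ∂P x)
  have hL : Measurable L := measurable_log_integral_exp hg
  have hL_bound : ∀ x, |L x| ≤ M := fun x =>
    abs_log_integral_exp_le (hg.comp measurable_prodMk_left) fun _ => hM _
  have hgL : Measurable fun z : X × Y => g z - L z.1 := by fun_prop
  have hgL_exp : Integrable (fun z : X × Y => exp (g z - L z.1)) (ν ⊗ₘ P) :=
    integrable_exp_of_measurable_of_abs_le hgL fun z =>
      (abs_sub _ _).trans (add_le_add (hM z) (hL_bound z.1))
  have integral_section : ∀ x, ∫ y, exp (g (x, y) - L x) ∂P x = 1 := fun x => by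
    have hpos := integral_exp_pos (integrable_exp_section (P := P) hg hM x)
    simp only [L, exp_sub, exp_log hpos, integral_div, div_self hpos.ne']
  have integral_exp : ∫ z, exp (g z - L z.1) ∂(ν ⊗ₘ P) = 1 := by
    rw [Measure.integral_compProd hgL_exp]
    simp [integral_section]
  have integral_L : ∫ z, L z.1 ∂μ = meanLogLaplace P ν g := by
    rw [meanLogLaplace, ← hμ, Measure.fst,
      integral_map measurable_fst.aemeasurable hL.aestronglyMeasurable]
  have hg_int : Integrable g μ := integrable_of_measurable_of_abs_le hg hM
  have hL_int : Integrable (fun z => L z.1) μ :=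
    integrable_of_measurable_of_abs_le (by fun_prop) fun z => hL_bound z.1
  have h := integral_sub_log_integral_exp_le_toReal_klDiv hkl (hg_int.sub hL_int) hgL_exp
  simpa [integral_exp, integral_sub hg_int hL_int, integral_L] using h

end MeanLogLaplace

section Coupling

variable {X Y : Type*} [TopologicalSpace X] [MeasurableSpace X] [TopologicalSpace Y]
  [MeasurableSpace Y] {P : Kernel X Y} [IsMarkovKernel P] {ν : Measure X} {I : ℝ}

theorem map_nonneg_of_le_meanLogLaplace_add {Λ : C(X × Y, ℝ) →ₗ[ℝ] ℝ}
    (h : ∀ g : C(X × Y, ℝ), Λ g ≤ meanLogLaplace P ν g + I) {g : C(X × Y, ℝ)} (hg : 0 ≤ g) :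
    0 ≤ Λ g := by
  have nsmul_neg_le : ∀ n : ℕ, n • -Λ g ≤ I := fun n =>
    calc n • -Λ g = Λ (n • -g) := by rw [map_nsmul, map_neg]
      _ ≤ meanLogLaplace P ν (n • -g) + I := h _
      _ ≤ I := add_le_of_nonpos_left <| meanLogLaplace_nonpos fun z =>
        smul_nonpos_of_nonneg_of_nonpos n.zero_le (neg_nonpos.2 (hg z))
  by_contra! hneg
  obtain ⟨n, hn⟩ := exists_lt_nsmul (neg_pos.2 hneg) I
  exact hn.not_ge (nsmul_neg_le n)

variable [CompactSpace X] [BorelSpace X] [CompactSpace Y] [BorelSpace Y] [IsProbabilityMeasure ν]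

section

variable [SecondCountableTopologyEither X Y]

theorem convexOn_meanLogLaplace :
    ConvexOn ℝ Set.univ fun g : C(X × Y, ℝ) => meanLogLaplace P ν g :=
  ⟨convex_univ, fun f _ g _ _ _ ha hb hab =>
    meanLogLaplace_convex_combination_le f.measurable f.norm_coe_le_norm g.measurable
      g.norm_coe_le_norm ha hb hab⟩

theorem exists_linearMap_le_meanLogLaplace_add {ν' : Measure Y} [IsProbabilityMeasure ν']
    (h : ∀ v : C(Y, ℝ), ∫ y, v y ∂ν' - meanLogLaplace P ν (fun z => v z.2) ≤ I) :
    ∃ Λ : C(X × Y, ℝ) →ₗ[ℝ] ℝ, (∀ u : C(X, ℝ), Λ (u.comp .fst) = ∫ x, u x ∂ν) ∧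
      (∀ v : C(Y, ℝ), Λ (v.comp .snd) = ∫ y, v y ∂ν') ∧
      ∀ g : C(X × Y, ℝ), Λ g ≤ meanLogLaplace P ν g + I := by
  let fstₗ := (ContinuousMap.compRightAlgHom ℝ ℝ (.fst : C(X × Y, X))).toLinearMap
  let sndₗ := (ContinuousMap.compRightAlgHom ℝ ℝ (.snd : C(X × Y, Y))).toLinearMap
  let prodIntegral : C(X × Y, ℝ) →ₗ[ℝ] ℝ :=
    { toFun := fun g => ∫ z, g z ∂(ν.prod ν')
      map_add' := fun f g => integral_add
        (integrable_of_measurable_of_abs_le f.measurable f.norm_coe_le_norm)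
        (integrable_of_measurable_of_abs_le g.measurable g.norm_coe_le_norm)
      map_smul' := fun c _ => integral_const_mul c _ }
  have integral_fst : ∀ u, prodIntegral (fstₗ u) = ∫ x, u x ∂ν := fun u =>
    (integral_fun_fst _).trans (by simp)
  have integral_snd : ∀ v, prodIntegral (sndₗ v) = ∫ y, v y ∂ν' := fun v =>
    (integral_fun_snd _).trans (by simp)
  have dominated : ∀ g : LinearMap.range (fstₗ.coprod sndₗ),
      prodIntegral g ≤ meanLogLaplace P ν g + I := by
    rintro ⟨_, ⟨u, v⟩, rfl⟩
    calc prodIntegral (fstₗ u + sndₗ v) = ∫ x, u x ∂ν + ∫ y, v y ∂ν' := by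
          rw [map_add, integral_fst, integral_snd]
      _ ≤ ∫ x, u x ∂ν + (meanLogLaplace P ν (fun z => v z.2) + I) := by
          gcongr
          exact sub_le_iff_le_add'.1 (h v)
      _ = meanLogLaplace P ν (fun z => u z.1 + v z.2) + I := by
          rw [← add_assoc, meanLogLaplace_fst_add (g := fun z => v z.2) (by fun_prop)
            (fun z => v.norm_coe_le_norm z.2)
            (integrable_of_measurable_of_abs_le u.measurable u.norm_coe_le_norm)]
  obtain ⟨Λ, Λ_eq, Λ_le⟩ :=
    exists_extension_of_le_convexOn (prodIntegral.toPMap _) (convexOn_meanLogLaplace.add_const I)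
      dominated
  have mem_range : ∀ u v, fstₗ u + sndₗ v ∈ LinearMap.range (fstₗ.coprod sndₗ) := fun u v =>
    ⟨(u, v), rfl⟩
  exact ⟨Λ, fun u => (Λ_eq ⟨fstₗ u, by simpa using mem_range u 0⟩).trans (integral_fst u),
    fun v => (Λ_eq ⟨sndₗ v, by simpa using mem_range 0 v⟩).trans (integral_snd v), Λ_le⟩

end

theorem exists_coupling_klDiv_le [T2Space X] [SecondCountableTopology X] [T2Space Y]
    [SecondCountableTopology Y] {ν' : Measure Y} [IsProbabilityMeasure ν']
    (h : ∀ v : C(Y, ℝ), ∫ y, v y ∂ν' - meanLogLaplace P ν (fun z => v z.2) ≤ I) :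
    ∃ μ : Measure (X × Y), IsProbabilityMeasure μ ∧ μ.fst = ν ∧ μ.snd = ν' ∧
      klDiv μ (ν ⊗ₘ P) ≤ ENNReal.ofReal I := by
  obtain ⟨Λ, Λ_fst, Λ_snd, Λ_le⟩ := exists_linearMap_le_meanLogLaplace_add h
  obtain ⟨μ, _, integral_eq⟩ := exists_isFiniteMeasure_forall_integral_eq Λ fun g hg =>
    map_nonneg_of_le_meanLogLaplace_add Λ_le hg
  have fst_eq : μ.fst = ν := ext_of_forall_integral_eq_of_IsFiniteMeasure fun u => by
    rw [Measure.fst, integral_map measurable_fst.aemeasurable u.continuous.aestronglyMeasurable]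
    exact (integral_eq (u.toContinuousMap.comp .fst)).trans (Λ_fst u.toContinuousMap)
  have snd_eq : μ.snd = ν' := ext_of_forall_integral_eq_of_IsFiniteMeasure fun v => by
    rw [Measure.snd, integral_map measurable_snd.aemeasurable v.continuous.aestronglyMeasurable]
    exact (integral_eq (v.toContinuousMap.comp .snd)).trans (Λ_snd v.toContinuousMap)
  refine ⟨μ, ⟨by rw [← Measure.fst_univ, fst_eq, measure_univ]⟩, fst_eq, snd_eq, ?_⟩
  refine klDiv_le_of_forall_integral_le fun g hg M hM =>
    integral_le_add_integral_of_boundedContinuous continuous_id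
      (continuous_exp.sub continuous_const) (fun k => ?_) hg hM
  calc ∫ z, k z ∂μ = Λ k.toContinuousMap := integral_eq k.toContinuousMap
    _ ≤ meanLogLaplace P ν k + I := Λ_le _
    _ ≤ ∫ z, (exp (k z) - 1) ∂(ν ⊗ₘ P) + I := by
      gcongr
      exact meanLogLaplace_le_integral_exp_sub_one k.continuous.measurable k.norm_coe_le_norm
    _ = I + ∫ z, (exp (k z) - 1) ∂(ν ⊗ₘ P) := add_comm _ _

end Coupling

section DonskerVaradhan

variable {Γ : Type*} [TopologicalSpace Γ] [CompactSpace Γ] [MeasurableSpace Γ] [BorelSpace Γ]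
  {P : Kernel Γ Γ} [IsMarkovKernel P] {ν : Measure Γ} [IsProbabilityMeasure ν]

theorem integral_log_integral_exp_div_exp (v : C(Γ, ℝ)) :
    ∫ x, log ((∫ y, exp (v y) ∂P x) / exp (v x)) ∂ν =
      meanLogLaplace P ν (fun z => v z.2) - ∫ x, v x ∂ν := by
  have hv : Measurable v := v.measurable
  have log_div_exp : ∀ x, log ((∫ y, exp (v y) ∂P x) / exp (v x)) =
      log (∫ y, exp (v y) ∂P x) - v x := fun x => by
    have hexp : Integrable (fun y => exp (v y)) (P x) :=
      integrable_exp_of_measurable_of_abs_le hv v.norm_coe_le_norm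
    rw [log_div (integral_exp_pos hexp).ne' (exp_pos _).ne', log_exp]
  simp only [log_div_exp]
  exact integral_sub (integrable_log_integral_exp (g := fun z => v z.2) (by fun_prop)
    fun z => v.norm_coe_le_norm z.2) (integrable_of_measurable_of_abs_le hv v.norm_coe_le_norm)

theorem isLUB_dvRate
    (hfin : BddBelow (Set.range fun f : {f : Γ → ℝ // Continuous f ∧ ∀ x, 0 < f x} =>
      ∫ x, log ((∫ y, f.1 y ∂P x) / f.1 x) ∂ν)) :
    IsLUB (Set.range fun v : C(Γ, ℝ) => ∫ x, v x ∂ν - meanLogLaplace P ν (fun z => v z.2))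
      (dvRate P ν) := by
  let expPos (v : C(Γ, ℝ)) : {f : Γ → ℝ // Continuous f ∧ ∀ x, 0 < f x} :=
    ⟨fun x => exp (v x), by fun_prop, fun x => exp_pos _⟩
  have surjective_expPos : Function.Surjective expPos := fun ⟨f, hf, hpos⟩ =>
    ⟨⟨fun x => log (f x), hf.log fun x => (hpos x).ne'⟩,
      Subtype.ext (funext fun x => exp_log (hpos x))⟩
  have : Nonempty {f : Γ → ℝ // Continuous f ∧ ∀ x, 0 < f x} := ⟨expPos 0⟩
  have isLUB_neg : IsLUB _ (dvRate P ν) := (isGLB_ciInf hfin).neg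
  rw [← surjective_expPos.range_comp, ← Set.image_neg_eq_neg, ← Set.range_comp] at isLUB_neg
  simpa only [Function.comp_def, expPos, integral_log_integral_exp_div_exp, neg_sub] using isLUB_neg

theorem dvRate_le_relEnt_of_fst_of_snd [SecondCountableTopology Γ]
    (hfin : BddBelow (Set.range fun f : {f : Γ → ℝ // Continuous f ∧ ∀ x, 0 < f x} =>
      ∫ x, log ((∫ y, f.1 y ∂P x) / f.1 x) ∂ν))
    {μ : Measure (Γ × Γ)} [IsProbabilityMeasure μ] (hfst : μ.fst = ν) (hsnd : μ.snd = ν) :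
    (dvRate P ν : EReal) ≤ relEnt μ (ν ⊗ₘ P) := by
  rw [relEnt_eq_klDiv (by simp)]
  by_cases hkl : klDiv μ (ν ⊗ₘ P) = ⊤
  · simp [hkl]
  rw [← ENNReal.ofReal_toReal hkl, EReal.coe_ennreal_ofReal, max_eq_left ENNReal.toReal_nonneg,
    EReal.coe_le_coe_iff]
  refine (isLUB_dvRate hfin).2 ?_
  rintro _ ⟨v, rfl⟩
  beta_reduce
  have integral_snd : ∫ z, v z.2 ∂μ = ∫ y, v y ∂ν := by
    rw [← hsnd, Measure.snd, integral_map measurable_snd.aemeasurable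
      v.measurable.aestronglyMeasurable]
  rw [← integral_snd]
  exact integral_sub_meanLogLaplace_le_toReal_klDiv hfst hkl (g := fun z => v z.2) (by fun_prop)
    fun z => v.norm_coe_le_norm z.2

end DonskerVaradhan

theorem stmt_19_general {Γ : Type*} [TopologicalSpace Γ] [CompactSpace Γ] [T2Space Γ]
    [SecondCountableTopology Γ] [MeasurableSpace Γ] [BorelSpace Γ]
    (P : Kernel Γ Γ) [IsMarkovKernel P] (ν : Measure Γ) [IsProbabilityMeasure ν]
    (hfin : BddBelow (Set.range fun f : {f : Γ → ℝ // Continuous f ∧ ∀ x, 0 < f x} =>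
      ∫ x, log ((∫ y, f.1 y ∂P x) / f.1 x) ∂ν)) :
    ∃ μ : Measure (Γ × Γ), IsProbabilityMeasure μ ∧ μ.fst = ν ∧ μ.snd = ν ∧
      relEnt μ (ν ⊗ₘ P) = (dvRate P ν : EReal) ∧
      ∀ μ' : Measure (Γ × Γ), IsProbabilityMeasure μ' → μ'.fst = ν → μ'.snd = ν →
        (dvRate P ν : EReal) ≤ relEnt μ' (ν ⊗ₘ P) := by
  have hLUB := isLUB_dvRate hfin
  have dvRate_nonneg : 0 ≤ dvRate P ν := hLUB.1 ⟨0, by simp [meanLogLaplace]⟩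
  obtain ⟨μ, _, hfst, hsnd, hkl⟩ := exists_coupling_klDiv_le fun v => hLUB.1 ⟨v, rfl⟩
  refine ⟨μ, ‹_›, hfst, hsnd, le_antisymm ?_ (dvRate_le_relEnt_of_fst_of_snd hfin hfst hsnd),
    fun μ' _ => dvRate_le_relEnt_of_fst_of_snd hfin⟩
  calc relEnt μ (ν ⊗ₘ P) = (klDiv μ (ν ⊗ₘ P) : EReal) := relEnt_eq_klDiv (by simp)
    _ ≤ (ENNReal.ofReal (dvRate P ν) : EReal) := EReal.coe_ennreal_le_coe_ennreal_iff.2 hkl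
    _ = (dvRate P ν : EReal) := by rw [EReal.coe_ennreal_ofReal, max_eq_left dvRate_nonneg]

/-- Donsker-Varadhan variational characterization, formula (3.66):
if `I(ν) < ∞` then there is a probability measure `μ` on `Γ × Γ` with both
marginals equal to `ν` and `D(μ‖μ^P) = I(ν)`, where `μ^P = ν ⊗ₘ P`; moreover
`I(ν) ≤ D(μ'‖μ'^P)` for every such `μ'`, i.e. the infimum in the variational
identity is attained. -/
theorem stmt_19 {Γ : Type*} [MetricSpace Γ] [CompactSpace Γ]
    [MeasurableSpace Γ] [BorelSpace Γ]
    (P : Kernel Γ Γ) [IsMarkovKernel P]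
    (hFeller : ∀ f : Γ → ℝ, Continuous f → Continuous (fun x => ∫ y, f y ∂ P x))
    (ν : Measure Γ) [IsProbabilityMeasure ν]
    (hfin : BddBelow (Set.range fun f : {f : Γ → ℝ // Continuous f ∧ ∀ x, 0 < f x} =>
      ∫ x, Real.log ((∫ y, f.1 y ∂ P x) / f.1 x) ∂ν)) :
    ∃ μ : Measure (Γ × Γ), IsProbabilityMeasure μ ∧ μ.fst = ν ∧ μ.snd = ν
      ∧ relEnt μ (ν.compProd P) = ((dvRate P ν : ℝ) : EReal)
      ∧ ∀ μ' : Measure (Γ × Γ), IsProbabilityMeasure μ' → μ'.fst = ν → μ'.snd = ν →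
          ((dvRate P ν : ℝ) : EReal) ≤ relEnt μ' (ν.compProd P) :=
  stmt_19_general P ν hfin
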